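/- For every inverse temperature β ∈ (0,∞) and every range exponent α ∈ (1,2), there exist constants c_β > 0 and C_β < ∞ (depending only on β and α) such that for every integer N ≥ 1, the variance of the height at the origin under the discrete Gaussian long-range chain satisfies c_β ≤ Var_{N,β,α}[φ(0)] ≤ C_β. In particular the chain is localised: the variance remains bounded uniformly in N. -/

import Mathlib

noncomputable section

/-- Configurations of the long-range chain of length `N`: integer-valued height functions
on `ℤ` vanishing outside `{-N, …, N}`. -/
def ChainConfig (N : ℕ) : Type :=
  {φ : ℤ → ℤ // ∀ k : ℤ, (N : ℤ) < |k| → φ k = 0}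

/-- Energy `β ∑_{i ≠ j} |φ(i) − φ(j)|^q / |i − j|^α` of a configuration of the long-range
chain with potential exponent `q` and range exponent `α`. -/
def chainEnergy (β α q : ℝ) (φ : ℤ → ℤ) : ℝ :=
  β * ∑' p : ℤ × ℤ,
      if p.1 = p.2 then 0
      else |((φ p.1 - φ p.2 : ℤ) : ℝ)| ^ q / |((p.1 - p.2 : ℤ) : ℝ)| ^ α

/-- Boltzmann weight of a configuration. -/
def chainWeight (β α q : ℝ) (φ : ℤ → ℤ) : ℝ :=
  Real.exp (-chainEnergy β α q φ)

/-- Partition function of the long-range chain. -/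
def chainZ (N : ℕ) (β α q : ℝ) : ℝ :=
  ∑' φ : ChainConfig N, chainWeight β α q φ.val

/-- Mean of the height at the origin. -/
def chainMean (N : ℕ) (β α q : ℝ) : ℝ :=
  (∑' φ : ChainConfig N, ((φ.val 0 : ℤ) : ℝ) * chainWeight β α q φ.val) / chainZ N β α q

/-- Variance of the height at the origin under the long-range chain `μ_{N,β,α}`
(with potential exponent `q`; `q = 2` is the discrete Gaussian chain,
`q ∈ (0,2)` the `q`-SOS chain). -/
def chainVar (N : ℕ) (β α q : ℝ) : ℝ :=
  (∑' φ : ChainConfig N, ((φ.val 0 : ℤ) : ℝ) ^ 2 * chainWeight β α q φ.val) / chainZ N β α q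
    - chainMean N β α q ^ 2

end

/-!
Comparing the averages of a square-summable field over the blocks `{k, …, k + 2 ^ n - 1}` for
consecutive `n` costs at most a geometric sequence of ratio `√(2 ^ α / 4)` times the square root of
the energy; for `α < 2` this ratio is below `1`, so `φ k ^ 2 ≤ K * H φ` with `K` independent of `N`.

For the upper bound, let `M t` be the sum over configurations of `exp (-H φ + t * φ 0)`. Completing
the square gives `M t ≤ A * exp (K * t ^ 2 / 2)`, with an `A` that depends on `N`. The parallelogram
law for `H` and the change of variables `(φ, ψ) ↦ (φ + ψ, φ - ψ)`, whose image consists of the pairs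
congruent modulo `2`, turn Cauchy-Schwarz over the classes modulo `2` into
`M t ^ 4 ≤ M (2 * t) * M 0 ^ 3`. Iterating this inequality replaces `A` by `M 0`, and the second
moment is controlled by `M 1 + M (-1)`.

The lower bound comes from translating by `±` the unit spike at the origin: the two translates have
average energy `H φ` plus the energy of the spike, which does not depend on `N`.
-/

open Finset Filter Topology Real
open scoped BigOperators

section FiberSums

variable {X Y : Type*} {a b : X → ℝ}

lemma sq_le_mul_of_hasSum {u v : Y → ℝ} {A B C : ℝ} (hA : HasSum (fun c => u c ^ 2) A)
    (hB : HasSum (fun c => u c * v c) B) (hC : HasSum (fun c => v c ^ 2) C) : B ^ 2 ≤ A * C :=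
  le_of_tendsto_of_tendsto' (Tendsto.pow hB 2) (Tendsto.mul hA hC) fun s =>
    sum_mul_sq_le_sq_mul_sq s u v

lemma summable_mul_of_fiber_eq (f : X → Y) (ha : Summable a) (hb : Summable b) :
    Summable fun p : {p : X × X // f p.1 = f p.2} => a p.1.1 * b p.1.2 :=
  (summable_mul_of_summable_norm ha.norm hb.norm).subtype _

lemma hasSum_tsum_fiber_mul_tsum_fiber (f : X → Y) (ha : Summable a) (hb : Summable b) :
    HasSum (fun c => (∑' x : {x // f x = c}, a x) * ∑' x : {x // f x = c}, b x)
      (∑' p : {p : X × X // f p.1 = f p.2}, a p.1.1 * b p.1.2) := by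
  let e : (Σ c, {x // f x = c} × {x // f x = c}) ≃ {p : X × X // f p.1 = f p.2} :=
    { toFun := fun q => ⟨(q.2.1, q.2.2), q.2.1.2.trans q.2.2.2.symm⟩
      invFun := fun p => ⟨f p.1.2, ⟨p.1.1, p.2⟩, ⟨p.1.2, rfl⟩⟩
      left_inv := by rintro ⟨_, ⟨x, hx⟩, ⟨y, rfl⟩⟩; rfl
      right_inv := fun _ => rfl }
  refine (e.hasSum_iff.2 (summable_mul_of_fiber_eq f ha hb).hasSum).sigma fun c => ?_
  have hac : Summable fun x : {x // f x = c} => ‖a x‖ := ha.norm.subtype _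
  have hbc : Summable fun x : {x // f x = c} => ‖b x‖ := hb.norm.subtype _
  rw [tsum_mul_tsum_of_summable_norm hac hbc]
  exact (summable_mul_of_summable_norm hac hbc).hasSum

lemma sq_tsum_mul_of_fiber_eq_le (f : X → Y) (ha : Summable a) (hb : Summable b) :
    (∑' p : {p : X × X // f p.1 = f p.2}, a p.1.1 * b p.1.2) ^ 2
      ≤ (∑' p : {p : X × X // f p.1 = f p.2}, a p.1.1 * a p.1.2)
        * ∑' p : {p : X × X // f p.1 = f p.2}, b p.1.1 * b p.1.2 :=
  sq_le_mul_of_hasSum (by simpa only [sq] using hasSum_tsum_fiber_mul_tsum_fiber f ha ha)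
    (hasSum_tsum_fiber_mul_tsum_fiber f ha hb)
    (by simpa only [sq] using hasSum_tsum_fiber_mul_tsum_fiber f hb hb)

end FiberSums

section ModTwo

variable {G : Type*} [AddCommGroup G]

/-- The class of `g` in `G ⧸ 2G`; two elements have the same class exactly when they are the sum
and the difference of a common pair of elements of `G`. -/
def modTwo (g : G) : G ⧸ (nsmulAddMonoidHom (α := G) 2).range := g

lemma modTwo_add_eq_modTwo_sub (g h : G) : modTwo (g + h) = modTwo (g - h) :=
  QuotientAddGroup.eq.2 ⟨-h, by simp only [nsmulAddMonoidHom_apply]; abel⟩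

lemma bijective_add_sub_modTwo [IsAddTorsionFree G] :
    Function.Bijective fun p : G × G =>
      (⟨(p.1 + p.2, p.1 - p.2), modTwo_add_eq_modTwo_sub p.1 p.2⟩ :
        {p : G × G // modTwo p.1 = modTwo p.2}) := by
  constructor
  · rintro ⟨g, h⟩ ⟨g', h'⟩ hgh
    obtain ⟨hadd, hsub⟩ := Prod.mk.inj (Subtype.mk.inj hgh)
    have hg : g = g' := nsmul_right_injective two_ne_zero <| by
      simpa [two_nsmul] using congrArg₂ (· + ·) hadd hsub
    exact Prod.ext hg (by simpa [hg] using hadd)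
  · rintro ⟨⟨s, d⟩, hsd⟩
    obtain ⟨h, hh⟩ := QuotientAddGroup.eq.1 hsd
    have hd : d = s + 2 • h := by rw [← nsmulAddMonoidHom_apply, hh]; abel
    exact ⟨(s + h, -h), Subtype.ext <| Prod.ext (by simp) (by simp [hd, two_nsmul, add_assoc])⟩

lemma tsum_mul_of_modTwo_eq [IsAddTorsionFree G] (a b : G → ℝ) :
    ∑' p : {p : G × G // modTwo p.1 = modTwo p.2}, a p.1.1 * b p.1.2
      = ∑' p : G × G, a (p.1 + p.2) * b (p.1 - p.2) :=
  ((Equiv.ofBijective _ bijective_add_sub_modTwo).tsum_eq fun p => a p.1.1 * b p.1.2).symm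

end ModTwo

section SelfImprovement

variable {r : ℝ → ℝ} {A b : ℝ}

lemma pow_four_pow_le_apply_two_pow_mul (hr₀ : ∀ t, 0 ≤ r t) (hr : ∀ t, r t ^ 4 ≤ r (2 * t))
    (t : ℝ) (n : ℕ) : r t ^ 4 ^ n ≤ r (2 ^ n * t) := by
  induction n with
  | zero => simp
  | succ n ih =>
    calc r t ^ 4 ^ (n + 1) = (r t ^ 4 ^ n) ^ 4 := by rw [← pow_mul, pow_succ]
      _ ≤ r (2 ^ n * t) ^ 4 := pow_le_pow_left₀ (pow_nonneg (hr₀ t) _) ih 4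
      _ ≤ r (2 * (2 ^ n * t)) := hr _
      _ = r (2 ^ (n + 1) * t) := by rw [pow_succ']; ring_nf

lemma le_exp_mul_sq_of_pow_four_le (hr₀ : ∀ t, 0 ≤ r t) (hr : ∀ t, r t ^ 4 ≤ r (2 * t))
    (hA : ∀ t, r t ≤ A * exp (b * t ^ 2)) (t : ℝ) : r t ≤ exp (b * t ^ 2) := by
  have ratio_pow_le (n : ℕ) : (r t / exp (b * t ^ 2)) ^ 4 ^ n ≤ A := by
    rw [div_pow, div_le_iff₀ (by positivity)]
    calc r t ^ 4 ^ n ≤ r (2 ^ n * t) := pow_four_pow_le_apply_two_pow_mul hr₀ hr t n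
      _ ≤ A * exp (b * (2 ^ n * t) ^ 2) := hA _
      _ = A * exp (b * t ^ 2) ^ 4 ^ n := by
        rw [← exp_nat_mul, mul_pow, ← pow_mul, mul_comm n, pow_mul]
        push_cast
        ring_nf
  by_contra! hlt
  have one_lt : 1 < r t / exp (b * t ^ 2) := (one_lt_div (exp_pos _)).2 hlt
  obtain ⟨n, hn⟩ := pow_unbounded_of_one_lt A one_lt
  have hmono := pow_le_pow_right₀ one_lt.le (Nat.lt_pow_self (by norm_num : 1 < 4)).le (m := n)
  linarith [ratio_pow_le n]

end SelfImprovement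

section GibbsSums

variable {G : Type*} [AddCommGroup G]

/-- `H` is a quadratic energy on the group `G`, expressed through the parallelogram law so that
no scalar extension of `G` is needed. -/
def ParallelogramLaw (H : G → ℝ) : Prop :=
  ∀ φ ψ, H (φ + ψ) + H (φ - ψ) = 2 * H φ + 2 * H ψ

lemma ParallelogramLaw.neg {H : G → ℝ} (hH : ParallelogramLaw H) (φ : G) : H (-φ) = H φ := by
  have hzero := hH 0 0
  have hφ := hH 0 φ
  simp only [add_zero, sub_zero, zero_add, zero_sub] at hzero hφ
  linarith

lemma ParallelogramLaw.tsum_mul_exp_neg_eq_zero {H : G → ℝ} (hH : ParallelogramLaw H)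
    (ℓ : G →+ ℝ) : ∑' φ, ℓ φ * exp (-H φ) = 0 := by
  have hneg := (Equiv.neg G).tsum_eq fun φ => ℓ φ * exp (-H φ)
  simp only [Equiv.neg_apply, hH.neg, map_neg, neg_mul, tsum_neg] at hneg
  linarith

/-- The moment generating function of `ℓ` under the Gibbs weight `exp (-H)`, not normalised: at
`t = 0` it is the partition function. -/
noncomputable def tiltedPartition (H : G → ℝ) (ℓ : G →+ ℝ) (t : ℝ) : ℝ :=
  ∑' φ, exp (-H φ + t * ℓ φ)

lemma tiltedPartition_zero (H : G → ℝ) (ℓ : G →+ ℝ) :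
    tiltedPartition H ℓ 0 = ∑' φ, exp (-H φ) := by
  simp [tiltedPartition]

lemma mul_le_mul_add_of_sq_le_mul {x h K c : ℝ} (hK : 0 < K) (hc : 0 < c) (hx : x ^ 2 ≤ K * h)
    (t : ℝ) : t * x ≤ c * h + t ^ 2 * K / (4 * c) := by
  have hsq : 0 ≤ (2 * c * x - t * K) ^ 2 / (4 * c * K) := by positivity
  have hexpand : (2 * c * x - t * K) ^ 2 / (4 * c * K)
      = c / K * x ^ 2 + t ^ 2 * K / (4 * c) - t * x := by field_simp; ring
  have hx' : c / K * x ^ 2 ≤ c * h := by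
    calc c / K * x ^ 2 ≤ c / K * (K * h) := by gcongr
      _ = c * h := by field_simp
  linarith

variable {H : G → ℝ} {ℓ : G →+ ℝ} {K : ℝ}

section

variable (hK : 0 < K) (hℓ : ∀ φ, ℓ φ ^ 2 ≤ K * H φ)
  (hsum : ∀ c : ℝ, 0 < c → Summable fun φ => exp (-(c * H φ)))

include hK hℓ hsum

lemma summable_exp_tilted {c : ℝ} (hc : 0 < c) (t : ℝ) :
    Summable fun φ => exp (-(c * H φ) + t * ℓ φ) := by
  refine .of_nonneg_of_le (fun _ => (exp_pos _).le) (fun φ => ?_)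
    ((hsum (c / 2) (half_pos hc)).mul_left (exp (t ^ 2 * K / (4 * (c / 2)))))
  rw [← exp_add, exp_le_exp]
  linarith [mul_le_mul_add_of_sq_le_mul hK (half_pos hc) (hℓ φ) t]

lemma summable_exp_neg_add (t : ℝ) : Summable fun φ => exp (-H φ + t * ℓ φ) := by
  simpa only [one_mul] using summable_exp_tilted hK hℓ hsum one_pos t

lemma tiltedPartition_pos (t : ℝ) : 0 < tiltedPartition H ℓ t :=
  (summable_exp_neg_add hK hℓ hsum t).tsum_pos (fun _ => (exp_pos _).le) 0 (exp_pos _)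

lemma tiltedPartition_le_exp_mul_tsum (t : ℝ) :
    tiltedPartition H ℓ t ≤ (∑' φ, exp (-(1 / 2 * H φ))) * exp (K / 2 * t ^ 2) := by
  rw [← tsum_mul_right]
  refine (summable_exp_neg_add hK hℓ hsum t).tsum_le_tsum (fun φ => ?_)
    ((hsum (1 / 2) one_half_pos).mul_right _)
  rw [← exp_add, exp_le_exp]
  linarith [mul_le_mul_add_of_sq_le_mul hK one_half_pos (hℓ φ) t]

lemma tsum_modTwo_exp_tilted [IsAddTorsionFree G] (hH : ParallelogramLaw H) (u v : ℝ) :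
    ∑' p : {p : G × G // modTwo p.1 = modTwo p.2},
        exp (-(1 / 2 * H p.1.1) + u * ℓ p.1.1) * exp (-(1 / 2 * H p.1.2) + v * ℓ p.1.2)
      = tiltedPartition H ℓ (u + v) * tiltedPartition H ℓ (u - v) := by
  rw [tsum_mul_of_modTwo_eq (fun φ => exp (-(1 / 2 * H φ) + u * ℓ φ))
      fun φ => exp (-(1 / 2 * H φ) + v * ℓ φ), tiltedPartition, tiltedPartition,
    tsum_mul_tsum_of_summable_norm (summable_exp_neg_add hK hℓ hsum _).norm
      (summable_exp_neg_add hK hℓ hsum _).norm]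
  refine tsum_congr fun p => ?_
  rw [← exp_add, ← exp_add, map_add, map_sub]
  congr 1
  linear_combination (-1 / 2) * hH p.1 p.2

lemma tiltedPartition_pow_four_le [IsAddTorsionFree G] (hH : ParallelogramLaw H) (t : ℝ) :
    tiltedPartition H ℓ t ^ 4 ≤ tiltedPartition H ℓ (2 * t) * tiltedPartition H ℓ 0 ^ 3 := by
  have hCS := sq_tsum_mul_of_fiber_eq_le (modTwo (G := G))
    (summable_exp_tilted hK hℓ hsum one_half_pos t) (summable_exp_tilted hK hℓ hsum one_half_pos 0)
  simp only [tsum_modTwo_exp_tilted hK hℓ hsum hH, add_zero, sub_zero, sub_self, mul_zero,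
    ← two_mul] at hCS
  linarith

lemma tiltedPartition_le_exp_mul [IsAddTorsionFree G] (hH : ParallelogramLaw H) (t : ℝ) :
    tiltedPartition H ℓ t ≤ exp (K / 2 * t ^ 2) * tiltedPartition H ℓ 0 := by
  have hZ := tiltedPartition_pos hK hℓ hsum 0
  rw [← div_le_iff₀ hZ]
  refine le_exp_mul_sq_of_pow_four_le (r := fun t => tiltedPartition H ℓ t / tiltedPartition H ℓ 0)
    (A := (∑' φ, exp (-(1 / 2 * H φ))) / tiltedPartition H ℓ 0)
    (fun t => div_nonneg (tiltedPartition_pos hK hℓ hsum t).le hZ.le) (fun t => ?_) (fun t => ?_) t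
  · rw [div_pow, div_le_div_iff₀ (by positivity) hZ]
    calc tiltedPartition H ℓ t ^ 4 * tiltedPartition H ℓ 0
        ≤ tiltedPartition H ℓ (2 * t) * tiltedPartition H ℓ 0 ^ 3 * tiltedPartition H ℓ 0 := by
          gcongr
          exact tiltedPartition_pow_four_le hK hℓ hsum hH t
      _ = tiltedPartition H ℓ (2 * t) * tiltedPartition H ℓ 0 ^ 4 := by ring
  · rw [div_mul_eq_mul_div]
    gcongr
    exact tiltedPartition_le_exp_mul_tsum hK hℓ hsum t

end

lemma sq_le_two_mul_exp_add_exp_neg (x : ℝ) : x ^ 2 ≤ 2 * (exp x + exp (-x)) := by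
  have hquad := quadratic_le_exp_of_nonneg (abs_nonneg x)
  rw [sq_abs] at hquad
  linarith [exp_abs_le x, abs_nonneg x]

lemma sq_mul_exp_neg_le (H : G → ℝ) (ℓ : G →+ ℝ) (φ : G) :
    ℓ φ ^ 2 * exp (-H φ) ≤ 2 * (exp (-H φ + 1 * ℓ φ) + exp (-H φ + -1 * ℓ φ)) := by
  calc ℓ φ ^ 2 * exp (-H φ) ≤ 2 * (exp (ℓ φ) + exp (-ℓ φ)) * exp (-H φ) := by
        gcongr
        exact sq_le_two_mul_exp_add_exp_neg _
    _ = 2 * (exp (-H φ + 1 * ℓ φ) + exp (-H φ + -1 * ℓ φ)) := by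
        rw [exp_add, exp_add, one_mul, neg_one_mul]
        ring

lemma summable_sq_mul_exp_neg (hK : 0 < K) (hℓ : ∀ φ, ℓ φ ^ 2 ≤ K * H φ)
    (hsum : ∀ c : ℝ, 0 < c → Summable fun φ => exp (-(c * H φ))) :
    Summable fun φ => ℓ φ ^ 2 * exp (-H φ) :=
  .of_nonneg_of_le (fun φ => by positivity) (sq_mul_exp_neg_le H ℓ)
    (((summable_exp_neg_add hK hℓ hsum 1).add (summable_exp_neg_add hK hℓ hsum (-1))).mul_left 2)

lemma tsum_sq_mul_exp_neg_le [IsAddTorsionFree G] (hK : 0 < K) (hℓ : ∀ φ, ℓ φ ^ 2 ≤ K * H φ)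
    (hsum : ∀ c : ℝ, 0 < c → Summable fun φ => exp (-(c * H φ))) (hH : ParallelogramLaw H) :
    ∑' φ, ℓ φ ^ 2 * exp (-H φ) ≤ 4 * exp (K / 2) * ∑' φ, exp (-H φ) := by
  have hpos := summable_exp_neg_add hK hℓ hsum 1
  have hneg := summable_exp_neg_add hK hℓ hsum (-1)
  have hpos_le := tiltedPartition_le_exp_mul hK hℓ hsum hH 1
  have hneg_le := tiltedPartition_le_exp_mul hK hℓ hsum hH (-1)
  calc ∑' φ, ℓ φ ^ 2 * exp (-H φ)
      ≤ ∑' φ, 2 * (exp (-H φ + 1 * ℓ φ) + exp (-H φ + -1 * ℓ φ)) :=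
        (summable_sq_mul_exp_neg hK hℓ hsum).tsum_le_tsum (sq_mul_exp_neg_le H ℓ)
          ((hpos.add hneg).mul_left 2)
    _ = 2 * (tiltedPartition H ℓ 1 + tiltedPartition H ℓ (-1)) := by
        rw [tsum_mul_left, hpos.tsum_add hneg, tiltedPartition, tiltedPartition]
    _ ≤ 4 * exp (K / 2) * ∑' φ, exp (-H φ) := by
        rw [← tiltedPartition_zero H ℓ]
        norm_num at hpos_le hneg_le
        linarith

/-- AM-GM on the two translates by `±δ`, whose energies average to `H φ + H δ`. -/
lemma ParallelogramLaw.exp_neg_mul_le_translates (hH : ParallelogramLaw H) (ℓ : G →+ ℝ)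
    (δ φ : G) :
    2 * exp (-H δ) * (ℓ δ ^ 2 * exp (-H φ) - ℓ φ ^ 2 * exp (-H φ))
      ≤ ℓ (φ + δ) ^ 2 * exp (-H (φ + δ)) + ℓ (φ - δ) ^ 2 * exp (-H (φ - δ)) := by
  have sq_exp_half (x : ℝ) : exp (-x) = exp (-x / 2) ^ 2 := by
    rw [← exp_nat_mul]
    congr 1
    push_cast
    ring
  have hprod : exp (-H δ) * exp (-H φ) = exp (-H (φ + δ) / 2) * exp (-H (φ - δ) / 2) := by
    rw [← exp_add, ← exp_add]
    congr 1
    linear_combination (1 / 2) * hH φ δ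
  rw [sq_exp_half (H (φ + δ)), sq_exp_half (H (φ - δ)), map_add, map_sub]
  calc 2 * exp (-H δ) * (ℓ δ ^ 2 * exp (-H φ) - ℓ φ ^ 2 * exp (-H φ))
      = -(2 * ((ℓ φ + ℓ δ) * exp (-H (φ + δ) / 2)) * ((ℓ φ - ℓ δ) * exp (-H (φ - δ) / 2))) := by
        linear_combination 2 * (ℓ δ ^ 2 - ℓ φ ^ 2) * hprod
    _ ≤ (ℓ φ + ℓ δ) ^ 2 * exp (-H (φ + δ) / 2) ^ 2
        + (ℓ φ - ℓ δ) ^ 2 * exp (-H (φ - δ) / 2) ^ 2 := by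
        linarith [sq_nonneg ((ℓ φ + ℓ δ) * exp (-H (φ + δ) / 2)
          + (ℓ φ - ℓ δ) * exp (-H (φ - δ) / 2))]

lemma mul_tsum_exp_neg_le_tsum_sq (hH : ParallelogramLaw H) (hZ : Summable fun φ => exp (-H φ))
    (hsq : Summable fun φ => ℓ φ ^ 2 * exp (-H φ)) (δ : G) :
    exp (-H δ) / (1 + exp (-H δ)) * ℓ δ ^ 2 * ∑' φ, exp (-H φ)
      ≤ ∑' φ, ℓ φ ^ 2 * exp (-H φ) := by
  have hadd := (Equiv.addRight δ).hasSum_iff.2 hsq.hasSum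
  have hsub := (Equiv.subRight δ).hasSum_iff.2 hsq.hasSum
  have hle := hasSum_le (hH.exp_neg_mul_le_translates ℓ δ)
    (((hZ.hasSum.mul_left (ℓ δ ^ 2)).sub hsq.hasSum).mul_left (2 * exp (-H δ))) (hadd.add hsub)
  rw [div_mul_eq_mul_div, div_mul_eq_mul_div, div_le_iff₀ (by positivity)]
  linarith

end GibbsSums

section GaussianSummability

lemma summable_prod_apply {ι κ : Type*} [Fintype ι] {g : κ → ℝ} (hg : Summable g)
    (hg₀ : 0 ≤ g) : Summable fun φ : ι → κ => ∏ i, g (φ i) := by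
  classical
  refine summable_of_sum_le (c := ∏ _i : ι, ∑' n, g n)
    (fun φ => prod_nonneg fun i _ => hg₀ (φ i)) fun u => ?_
  have hsub : u ⊆ Fintype.piFinset fun i => u.image (· i) := fun φ hφ =>
    Fintype.mem_piFinset.2 fun i => mem_image_of_mem (· i) hφ
  calc ∑ φ ∈ u, ∏ i, g (φ i)
      ≤ ∑ φ ∈ Fintype.piFinset fun i => u.image (· i), ∏ i, g (φ i) :=
        sum_le_sum_of_subset_of_nonneg hsub fun φ _ _ => prod_nonneg fun i _ => hg₀ (φ i)
    _ = ∏ i, ∑ n ∈ u.image (· i), g n := (prod_univ_sum _ fun _ => g).symm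
    _ ≤ ∏ _i : ι, ∑' n, g n :=
        prod_le_prod (fun i _ => sum_nonneg fun n _ => hg₀ n)
          fun i _ => hg.sum_le_tsum _ fun n _ => hg₀ n

lemma summable_exp_neg_mul_int_sq {c : ℝ} (hc : 0 < c) :
    Summable fun n : ℤ => exp (-(c * (n : ℝ) ^ 2)) := by
  have hnat : Summable fun n : ℕ => exp (-(c * (n : ℝ) ^ 2)) := by
    refine .of_nonneg_of_le (fun _ => (exp_pos _).le) (fun n => ?_)
      (summable_exp_nat_mul_iff.2 (neg_lt_zero.2 hc))
    have hn : (n : ℝ) ≤ (n : ℝ) ^ 2 := mod_cast Nat.le_self_pow two_ne_zero n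
    rw [exp_le_exp]
    linarith [mul_le_mul_of_nonneg_left hn hc.le]
  exact .of_nat_of_neg (by simpa using hnat) (by simpa using hnat)

lemma summable_exp_neg_of_sq_le {X ι : Type*} [Finite ι] {x : X → ι → ℤ}
    (hx : Function.Injective x) {H : X → ℝ} {K : ℝ} (hK : 0 < K)
    (hH : ∀ φ, 0 ≤ H φ) (hxH : ∀ φ i, (x φ i : ℝ) ^ 2 ≤ K * H φ) {c : ℝ} (hc : 0 < c) :
    Summable fun φ => exp (-(c * H φ)) := by
  have := Fintype.ofFinite ι
  set m : ℝ := Fintype.card ι + 1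
  have hgauss := (summable_prod_apply (ι := ι)
    (summable_exp_neg_mul_int_sq (c := c / (K * m)) (by positivity))
    fun _ => (exp_pos _).le).comp_injective hx
  refine .of_nonneg_of_le (fun _ => (exp_pos _).le) (fun φ => ?_) hgauss
  rw [Function.comp_apply, ← exp_sum, exp_le_exp, sum_neg_distrib, neg_le_neg_iff]
  calc ∑ i, c / (K * m) * (x φ i : ℝ) ^ 2 ≤ ∑ _i : ι, c / (K * m) * (K * H φ) := by
        gcongr with i
        exact hxH φ i
    _ = Fintype.card ι / m * (c * H φ) := by
        rw [sum_const, card_univ, nsmul_eq_mul]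
        field_simp
    _ ≤ c * H φ := by
        refine mul_le_of_le_one_left (mul_nonneg hc.le (hH φ)) ?_
        exact (div_le_one (by positivity)).2 (le_add_of_nonneg_right zero_le_one)

end GaussianSummability

section LongRangeEnergy

/-- The interaction of the sites `p.1` and `p.2` in a field `φ`. The diagonal contributes `0`
because `φ p.1 - φ p.2` vanishes there, whatever the junk value of `0 ^ (-α)`. -/
noncomputable def pairEnergy (α : ℝ) (φ : ℤ → ℝ) (p : ℤ × ℤ) : ℝ :=
  (φ p.1 - φ p.2) ^ 2 * |((p.1 - p.2 : ℤ) : ℝ)| ^ (-α)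

/-- The long-range Dirichlet energy of a real field on `ℤ`, at inverse temperature `1`. It is
meaningful only when `pairEnergy α φ` is summable. -/
noncomputable def longRangeEnergy (α : ℝ) (φ : ℤ → ℝ) : ℝ := ∑' p, pairEnergy α φ p

variable {α : ℝ} {φ ψ : ℤ → ℝ}

lemma pairEnergy_nonneg (α : ℝ) (φ : ℤ → ℝ) (p : ℤ × ℤ) : 0 ≤ pairEnergy α φ p := by
  unfold pairEnergy
  positivity

lemma longRangeEnergy_nonneg (α : ℝ) (φ : ℤ → ℝ) : 0 ≤ longRangeEnergy α φ :=
  tsum_nonneg (pairEnergy_nonneg α φ)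

lemma summable_pairEnergy (hα : 1 < α) (hφ : Summable fun k => φ k ^ 2) :
    Summable (pairEnergy α φ) := by
  have hprod : Summable fun p : ℤ × ℤ => 2 * φ p.1 ^ 2 * |(p.2 : ℝ)| ^ (-α) :=
    (hφ.mul_left 2).mul_of_nonneg (summable_abs_int_rpow hα) (fun k => by positivity)
      fun k => by positivity
  have hfst : Function.Injective fun p : ℤ × ℤ => (p.1, p.1 - p.2) := fun p q h => by
    rw [Prod.mk.injEq] at h
    ext <;> omega
  have hsnd : Function.Injective fun p : ℤ × ℤ => (p.2, p.1 - p.2) := fun p q h => by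
    rw [Prod.mk.injEq] at h
    ext <;> omega
  refine .of_nonneg_of_le (pairEnergy_nonneg α φ) (fun p => ?_)
    ((hprod.comp_injective hfst).add (hprod.comp_injective hsnd))
  simp only [Function.comp_apply, pairEnergy, ← add_mul]
  gcongr
  linarith [sq_nonneg (φ p.1 + φ p.2)]

lemma longRangeEnergy_add_add_longRangeEnergy_sub (hφ : Summable (pairEnergy α φ))
    (hψ : Summable (pairEnergy α ψ)) :
    longRangeEnergy α (φ + ψ) + longRangeEnergy α (φ - ψ)
      = 2 * longRangeEnergy α φ + 2 * longRangeEnergy α ψ := by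
  have hpair (p : ℤ × ℤ) : pairEnergy α (φ + ψ) p + pairEnergy α (φ - ψ) p
      = 2 * pairEnergy α φ p + 2 * pairEnergy α ψ p := by
    simp only [pairEnergy, Pi.add_apply, Pi.sub_apply]
    ring
  have hsum := (hφ.mul_left 2).add (hψ.mul_left 2)
  have hadd : Summable (pairEnergy α (φ + ψ)) :=
    .of_nonneg_of_le (pairEnergy_nonneg α _)
      (fun p => by linarith [hpair p, pairEnergy_nonneg α (φ - ψ) p]) hsum
  have hsub : Summable (pairEnergy α (φ - ψ)) :=
    .of_nonneg_of_le (pairEnergy_nonneg α _)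
      (fun p => by linarith [hpair p, pairEnergy_nonneg α (φ + ψ) p]) hsum
  simp only [longRangeEnergy]
  rw [← hadd.tsum_add hsub, ← tsum_mul_left, ← tsum_mul_left,
    ← (hφ.mul_left 2).tsum_add (hψ.mul_left 2)]
  exact tsum_congr hpair

lemma sq_sub_le_rpow_mul_pairEnergy (hα : 0 ≤ α) {i j : ℤ} {L : ℝ}
    (hL : |((i - j : ℤ) : ℝ)| ≤ L) : (φ i - φ j) ^ 2 ≤ L ^ α * pairEnergy α φ (i, j) := by
  rcases eq_or_ne i j with rfl | hij
  · simp [pairEnergy]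
  have hdist : 0 < |((i - j : ℤ) : ℝ)| := by
    rw [abs_pos, Int.cast_ne_zero]
    exact sub_ne_zero.2 hij
  have hone : 1 ≤ L ^ α * |((i - j : ℤ) : ℝ)| ^ (-α) := by
    rw [rpow_neg hdist.le, ← div_eq_mul_inv, one_le_div (by positivity)]
    exact rpow_le_rpow hdist.le hL hα
  calc (φ i - φ j) ^ 2 ≤ (φ i - φ j) ^ 2 * (L ^ α * |((i - j : ℤ) : ℝ)| ^ (-α)) :=
        le_mul_of_one_le_right (sq_nonneg _) hone
    _ = L ^ α * pairEnergy α φ (i, j) := by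
        simp only [pairEnergy]
        ring

end LongRangeEnergy

section BlockAverages

variable {α : ℝ} {φ : ℤ → ℝ}

lemma sq_expect_le_expect_sq {ι : Type*} {s : Finset ι} (hs : s.Nonempty) (f : ι → ℝ) :
    (𝔼 i ∈ s, f i) ^ 2 ≤ 𝔼 i ∈ s, f i ^ 2 := by
  simpa [expect_const hs] using expect_mul_sq_le_sq_mul_sq s f fun _ => 1

lemma sq_expect_sub_expect_le (hα : 0 ≤ α) (hφ : Summable (pairEnergy α φ)) {s t : Finset ℤ}
    (hs : s.Nonempty) (ht : t.Nonempty) {L : ℝ}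
    (hL : ∀ i ∈ s, ∀ j ∈ t, |((i - j : ℤ) : ℝ)| ≤ L) :
    (𝔼 i ∈ s, φ i - 𝔼 j ∈ t, φ j) ^ 2 ≤ L ^ α / (#s * #t) * longRangeEnergy α φ := by
  have hL₀ : 0 ≤ L := by
    obtain ⟨i, hi⟩ := hs
    obtain ⟨j, hj⟩ := ht
    exact (abs_nonneg _).trans (hL i hi j hj)
  have hsub : 𝔼 i ∈ s, φ i - 𝔼 j ∈ t, φ j = 𝔼 p ∈ s ×ˢ t, (φ p.1 - φ p.2) := by
    simp only [expect_product, expect_sub_distrib, expect_const hs, expect_const ht]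
  calc (𝔼 i ∈ s, φ i - 𝔼 j ∈ t, φ j) ^ 2
      ≤ 𝔼 p ∈ s ×ˢ t, (φ p.1 - φ p.2) ^ 2 := by
        rw [hsub]
        exact sq_expect_le_expect_sq (hs.product ht) _
    _ ≤ 𝔼 p ∈ s ×ˢ t, L ^ α * pairEnergy α φ p :=
        expect_le_expect fun p hp => sq_sub_le_rpow_mul_pairEnergy hα
          (hL p.1 (mem_product.1 hp).1 p.2 (mem_product.1 hp).2)
    _ = L ^ α / (#s * #t) * ∑ p ∈ s ×ˢ t, pairEnergy α φ p := by
        rw [expect_eq_sum_div_card, card_product, ← mul_sum]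
        push_cast
        ring
    _ ≤ L ^ α / (#s * #t) * longRangeEnergy α φ := by
        gcongr
        exact hφ.sum_le_tsum _ fun p _ => pairEnergy_nonneg α φ p

/-- The average of `φ` over the dyadic block `{k, …, k + 2 ^ n - 1}`; for growing `n` it
interpolates between `φ k` and the value `0` of `φ` at infinity. -/
noncomputable def dyadicAverage (φ : ℤ → ℝ) (k : ℤ) (n : ℕ) : ℝ :=
  𝔼 i ∈ Ico k (k + 2 ^ n), φ i

lemma dyadicAverage_zero (φ : ℤ → ℝ) (k : ℤ) : dyadicAverage φ k 0 = φ k := by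
  rw [dyadicAverage, pow_zero, Ico_add_one_right_eq_Icc, Icc_self, expect_singleton]

lemma nonempty_Ico_add_two_pow (k : ℤ) (n : ℕ) : (Ico k (k + 2 ^ n)).Nonempty := by
  simp

lemma card_Ico_add_two_pow (k : ℤ) (n : ℕ) : #(Ico k (k + 2 ^ n)) = 2 ^ n := by
  rw [Int.card_Ico, add_sub_cancel_left]
  exact_mod_cast Int.toNat_natCast (2 ^ n)

lemma sq_dyadicAverage_sub_succ_le (hα : 0 ≤ α) (hφ : Summable (pairEnergy α φ)) (k : ℤ) (n : ℕ) :
    (dyadicAverage φ k n - dyadicAverage φ k (n + 1)) ^ 2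
      ≤ 2 ^ α / 2 * (2 ^ α / 4) ^ n * longRangeEnergy α φ := by
  have hdist : ∀ i ∈ Ico k (k + 2 ^ n), ∀ j ∈ Ico k (k + 2 ^ (n + 1)),
      |((i - j : ℤ) : ℝ)| ≤ 2 ^ (n + 1) := fun i hi j hj => by
    rw [mem_Ico] at hi hj
    have hpow : (2 : ℤ) ^ (n + 1) = 2 * 2 ^ n := pow_succ' 2 n
    have hij : |i - j| ≤ 2 ^ (n + 1) := abs_le.2 ⟨by linarith, by linarith⟩
    exact_mod_cast hij
  refine (sq_expect_sub_expect_le hα hφ (nonempty_Ico_add_two_pow k n)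
    (nonempty_Ico_add_two_pow k (n + 1)) hdist).trans_eq ?_
  have hrpow : ((2 : ℝ) ^ (n + 1)) ^ α = 2 ^ α * (2 ^ α) ^ n := by
    rw [← rpow_natCast_mul zero_le_two, mul_comm, rpow_mul_natCast zero_le_two, pow_succ']
  have hfour : (4 : ℝ) ^ n = 2 ^ n * 2 ^ n := by rw [← mul_pow]; norm_num
  rw [card_Ico_add_two_pow, card_Ico_add_two_pow, hrpow, div_pow, hfour]
  push_cast
  rw [pow_succ]
  field_simp

lemma sq_dyadicAverage_le (hφ : Summable fun k => φ k ^ 2) (k : ℤ) (n : ℕ) :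
    dyadicAverage φ k n ^ 2 ≤ (∑' i, φ i ^ 2) / 2 ^ n := by
  calc dyadicAverage φ k n ^ 2 ≤ 𝔼 i ∈ Ico k (k + 2 ^ n), φ i ^ 2 :=
        sq_expect_le_expect_sq (nonempty_Ico_add_two_pow k n) φ
    _ = (∑ i ∈ Ico k (k + 2 ^ n), φ i ^ 2) / 2 ^ n := by
        rw [expect_eq_sum_div_card, card_Ico_add_two_pow]
        push_cast
        rfl
    _ ≤ (∑' i, φ i ^ 2) / 2 ^ n := by
        gcongr
        exact hφ.sum_le_tsum _ fun i _ => sq_nonneg (φ i)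

lemma tendsto_dyadicAverage (hφ : Summable fun k => φ k ^ 2) (k : ℤ) :
    Tendsto (dyadicAverage φ k) atTop (𝓝 0) := by
  have hbound : Tendsto (fun n : ℕ => (∑' i, φ i ^ 2) / 2 ^ n) atTop (𝓝 0) :=
    (tendsto_pow_atTop_atTop_of_one_lt one_lt_two).const_div_atTop _
  have hsqrt := (squeeze_zero (fun n => sq_nonneg _) (sq_dyadicAverage_le hφ k) hbound).sqrt
  simp only [sqrt_sq_eq_abs, sqrt_zero] at hsqrt
  exact (tendsto_zero_iff_abs_tendsto_zero _).2 hsqrt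

lemma exists_sq_apply_le_longRangeEnergy (hα₁ : 1 < α) (hα₂ : α < 2) :
    ∃ K, 0 < K ∧ ∀ φ : ℤ → ℝ, (Summable fun k => φ k ^ 2) →
      ∀ k, φ k ^ 2 ≤ K * longRangeEnergy α φ := by
  set r : ℝ := √(2 ^ α / 4)
  have hr : r < 1 := by
    have hpow : (2 : ℝ) ^ α < 2 ^ (2 : ℝ) := rpow_lt_rpow_of_exponent_lt one_lt_two hα₂
    rw [sqrt_lt' one_pos]
    norm_num at hpow ⊢
    linarith
  refine ⟨2 ^ α / 2 / (1 - r) ^ 2, div_pos (by positivity) (pow_pos (sub_pos.2 hr) 2),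
    fun φ hφ k => ?_⟩
  have hE := longRangeEnergy_nonneg α φ
  have hstep (n : ℕ) : dist (dyadicAverage φ k n) (dyadicAverage φ k (n + 1))
      ≤ √(2 ^ α / 2 * longRangeEnergy α φ) * r ^ n := by
    refine abs_le_of_sq_le_sq
      ((sq_dyadicAverage_sub_succ_le (by linarith) (summable_pairEnergy hα₁ hφ) k n).trans_eq ?_)
      (by positivity)
    rw [mul_pow, sq_sqrt (by positivity), pow_right_comm, sq_sqrt (by positivity)]
    ring
  have hdist := dist_le_of_le_geometric_of_tendsto₀ r _ hr hstep (tendsto_dyadicAverage hφ k)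
  rw [dyadicAverage_zero, dist_zero_right, norm_eq_abs] at hdist
  calc φ k ^ 2 = |φ k| ^ 2 := (sq_abs _).symm
    _ ≤ (√(2 ^ α / 2 * longRangeEnergy α φ) / (1 - r)) ^ 2 := by gcongr
    _ = 2 ^ α / 2 / (1 - r) ^ 2 * longRangeEnergy α φ := by
        rw [div_pow, sq_sqrt (by positivity)]
        ring

end BlockAverages

section Chain

variable {N : ℕ} {β α : ℝ}

/-- The subgroup of `ℤ → ℤ` underlying `ChainConfig N`. -/
def chainSubgroup (N : ℕ) : AddSubgroup (ℤ → ℤ) where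
  carrier := {φ | ∀ k : ℤ, (N : ℤ) < |k| → φ k = 0}
  zero_mem' := fun _ _ => rfl
  add_mem' := fun hφ hψ k hk => by rw [Pi.add_apply, hφ k hk, hψ k hk, add_zero]
  neg_mem' := fun hφ k hk => by rw [Pi.neg_apply, hφ k hk, neg_zero]

instance : AddCommGroup (ChainConfig N) := inferInstanceAs (AddCommGroup (chainSubgroup N))

instance : IsAddTorsionFree (ChainConfig N) :=
  inferInstanceAs (IsAddTorsionFree (chainSubgroup N))

/-- The height at the origin as a linear observable. -/
def heightAtOrigin (N : ℕ) : ChainConfig N →+ ℝ where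
  toFun φ := φ.val 0
  map_zero' := Int.cast_zero
  map_add' φ ψ := Int.cast_add (φ.val 0) (ψ.val 0)

/-- The configuration of height `1` at the origin and `0` elsewhere. -/
def unitSpike (N : ℕ) : ChainConfig N :=
  ⟨Pi.single 0 1, fun k hk => Pi.single_eq_of_ne (by rintro rfl; rw [abs_zero] at hk; omega) 1⟩

lemma heightAtOrigin_unitSpike (N : ℕ) : heightAtOrigin N (unitSpike N) = 1 := by
  change ((Pi.single 0 1 : ℤ → ℤ) 0 : ℝ) = 1
  simp

lemma summable_sq_chainConfig (φ : ChainConfig N) : Summable fun k => (φ.val k : ℝ) ^ 2 :=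
  summable_of_ne_finset_zero (s := Icc (-N : ℤ) N) fun k hk => by
    rw [mem_Icc, ← abs_le, not_le] at hk
    simp [φ.property k hk]

lemma chainEnergy_two (β α : ℝ) (φ : ℤ → ℤ) :
    chainEnergy β α 2 φ = β * longRangeEnergy α fun k => φ k := by
  unfold chainEnergy longRangeEnergy
  congr 1
  refine tsum_congr fun p => ?_
  split_ifs with hp
  · simp [pairEnergy, hp]
  · rw [pairEnergy, rpow_neg (abs_nonneg _), rpow_two, sq_abs, div_eq_mul_inv, Int.cast_sub]

lemma parallelogramLaw_chainEnergy (hα : 1 < α) :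
    ParallelogramLaw fun φ : ChainConfig N => chainEnergy β α 2 φ.val := fun φ ψ => by
  have hadd : (fun k => ((φ + ψ).val k : ℝ)) = (fun k => (φ.val k : ℝ)) + fun k => (ψ.val k : ℝ) :=
    funext fun k => Int.cast_add (φ.val k) (ψ.val k)
  have hsub : (fun k => ((φ - ψ).val k : ℝ)) = (fun k => (φ.val k : ℝ)) - fun k => (ψ.val k : ℝ) :=
    funext fun k => Int.cast_sub (φ.val k) (ψ.val k)
  simp only [chainEnergy_two, hadd, hsub]
  linear_combination β * longRangeEnergy_add_add_longRangeEnergy_sub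
    (summable_pairEnergy hα (summable_sq_chainConfig φ))
    (summable_pairEnergy hα (summable_sq_chainConfig ψ))

lemma exists_sq_apply_le_chainEnergy (hβ : 0 < β) (hα₁ : 1 < α) (hα₂ : α < 2) :
    ∃ K, 0 < K ∧ ∀ (N : ℕ) (φ : ChainConfig N) (k : ℤ),
      (φ.val k : ℝ) ^ 2 ≤ K * chainEnergy β α 2 φ.val := by
  obtain ⟨K, hK, hloc⟩ := exists_sq_apply_le_longRangeEnergy hα₁ hα₂
  refine ⟨K / β, div_pos hK hβ, fun N φ k => ?_⟩
  rw [chainEnergy_two, ← mul_assoc, div_mul_cancel₀ K hβ.ne']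
  exact hloc _ (summable_sq_chainConfig φ) k

lemma chainConfig_restrict_injective (N : ℕ) :
    Function.Injective fun (φ : ChainConfig N) (i : Icc (-N : ℤ) N) => φ.val i := fun φ ψ h => by
  refine Subtype.ext <| funext fun k => ?_
  by_cases hk : k ∈ Icc (-N : ℤ) N
  · exact congrFun h ⟨k, hk⟩
  · rw [mem_Icc, ← abs_le, not_le] at hk
    rw [φ.property k hk, ψ.property k hk]

lemma summable_exp_neg_mul_chainEnergy (hβ : 0 ≤ β) {K : ℝ} (hK : 0 < K)
    (hloc : ∀ (φ : ChainConfig N) (k : ℤ), (φ.val k : ℝ) ^ 2 ≤ K * chainEnergy β α 2 φ.val)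
    {c : ℝ} (hc : 0 < c) :
    Summable fun φ : ChainConfig N => exp (-(c * chainEnergy β α 2 φ.val)) := by
  refine summable_exp_neg_of_sq_le (chainConfig_restrict_injective N) hK (fun φ => ?_)
    (fun φ i => hloc φ i) hc
  rw [chainEnergy_two]
  exact mul_nonneg hβ (longRangeEnergy_nonneg α _)

lemma chainMean_eq_zero (hα : 1 < α) : chainMean N β α 2 = 0 := by
  have hodd : ∑' φ : ChainConfig N, (φ.val 0 : ℝ) * chainWeight β α 2 φ.val = 0 :=
    (parallelogramLaw_chainEnergy hα).tsum_mul_exp_neg_eq_zero (heightAtOrigin N)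
  rw [chainMean, hodd, zero_div]

lemma chainVar_eq_div (hα : 1 < α) :
    chainVar N β α 2 =
      (∑' φ : ChainConfig N, heightAtOrigin N φ ^ 2 * exp (-chainEnergy β α 2 φ.val))
        / ∑' φ : ChainConfig N, exp (-chainEnergy β α 2 φ.val) := by
  rw [chainVar, chainMean_eq_zero hα, sq 0, mul_zero, sub_zero]
  rfl

end Chain

/-- **Localisation of the discrete Gaussian long-range chain for `α ∈ (1,2)`.**
For every `β ∈ (0,∞)` and every `α ∈ (1,2)` there exist constants `c_β > 0` and
`C_β < ∞` such that for every `N ≥ 1`,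
`c_β ≤ Var_{N,β,α}[φ(0)] ≤ C_β`. -/
theorem gaussian_chain_localised_of_alpha_lt_two
    (β : ℝ) (hβ : 0 < β) (α : ℝ) (hα₁ : 1 < α) (hα₂ : α < 2) :
    ∃ c C : ℝ, 0 < c ∧
      ∀ N : ℕ, 1 ≤ N →
        c ≤ chainVar N β α 2 ∧ chainVar N β α 2 ≤ C := by
  obtain ⟨K, hK, hloc⟩ := exists_sq_apply_le_chainEnergy hβ hα₁ hα₂
  set D : ℝ := exp (-chainEnergy β α 2 (Pi.single 0 1))
  refine ⟨D / (1 + D), 4 * exp (K / 2), by positivity, fun N _ => ?_⟩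
  have hpar := parallelogramLaw_chainEnergy (N := N) (β := β) hα₁
  have hheight (φ : ChainConfig N) : heightAtOrigin N φ ^ 2 ≤ K * chainEnergy β α 2 φ.val :=
    hloc N φ 0
  have hsum (c : ℝ) (hc : 0 < c) := summable_exp_neg_mul_chainEnergy hβ.le hK (hloc N) hc
  have hZ : Summable fun φ : ChainConfig N => exp (-chainEnergy β α 2 φ.val) := by
    simpa only [one_mul] using hsum 1 one_pos
  have hZ_pos := hZ.tsum_pos (fun _ => (exp_pos _).le) 0 (exp_pos _)
  rw [chainVar_eq_div hα₁]
  refine ⟨(le_div_iff₀ hZ_pos).2 ?_, (div_le_iff₀ hZ_pos).2 ?_⟩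
  · have hspike :=
      mul_tsum_exp_neg_le_tsum_sq hpar hZ (summable_sq_mul_exp_neg hK hheight hsum) (unitSpike N)
    rwa [heightAtOrigin_unitSpike, one_pow, mul_one] at hspike
  · exact tsum_sq_mul_exp_neg_le hK hheight hsum hpar
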